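/- Let λ, A, B be real numbers with λ ∉ {0, −1, −3/4}, and let a_{000} be a real or complex number with λ² a_{000}² = 9(2 + 1/λ). Define a_{200} = a_{000}(A/λ + B) / (12(1 + 1/λ)), b_{200} = (B − A(2 + 1/λ)) / (4λ(1 + 1/λ)), a_{400} = [ a_{200}(1 + 3/λ)(A + 2λ b_{200}) − λ a_{000}( B b_{200} + λ a_{200}² − b_{200}² ) ] / (10(4 + 3/λ)), and b_{400} = −[ λ a_{000} a_{200}(A + 2λ b_{200}) − 2( B b_{200} + λ a_{200}² − b_{200}² ) ] / (10(4 + 3/λ)). Then λ a_{000} a_{400} A + 2λ² a_{000}( a_{200} b_{400} + a_{400} b_{200} ) − 3 b_{400} B − 6( λ a_{200} a_{400} − b_{200} b_{400} ) = 0. -/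

import Mathlib

/-- The rational identity behind (B8), with `s = a000 ^ 2` eliminated. -/
theorem B8_core (l A B s p b Q P q r : ℂ) (h0 : l ≠ 0) (h1 : l + 1 ≠ 0) (h2 : 4 * l + 3 ≠ 0)
    (hs : s = 9 * (2 * l + 1) / l ^ 3)
    (hp : p = (A + l * B) / (12 * (l + 1)))
    (hb : b = (l * B - A * (2 * l + 1)) / (4 * l * (l + 1)))
    (hP : P = A + 2 * l * b)
    (hQ : Q = B * b + l * (s * p ^ 2) - b ^ 2)
    (hq : q = (p * (l + 3) * P - l ^ 2 * Q) / (10 * (4 * l + 3)))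
    (hr : r = -((l ^ 2 * s * p * P - 2 * l * Q) / (10 * (4 * l + 3)))) :
    l * s * q * A + 2 * l ^ 2 * s * (p * r + q * b) - 3 * r * B
      - 6 * (l * s * p * q - b * r) = 0 := by
  subst hs hp hb hP hQ hq hr
  field_simp
  ring

/-- Compatibility condition (B8) at the resonance `(k,l,m) = (6,0,0)` of Appendix B of
the paper, verified from the explicitly computed lower-order coefficients (B9). -/
theorem compatibility_B8 (lam A B : ℝ)
    (hlam0 : lam ≠ 0) (hlam1 : lam ≠ -1) (hlam2 : lam ≠ -3 / 4)
    (a000 a200 b200 a400 b400 : ℂ)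
    (ha000 : (lam : ℂ) ^ 2 * a000 ^ 2 = 9 * (2 + 1 / (lam : ℂ)))
    (ha200 : a200 = a000 * ((A : ℂ) / (lam : ℂ) + (B : ℂ)) / (12 * (1 + 1 / (lam : ℂ))))
    (hb200 : b200 = ((B : ℂ) - (A : ℂ) * (2 + 1 / (lam : ℂ))) /
        (4 * (lam : ℂ) * (1 + 1 / (lam : ℂ))))
    (ha400 : a400 = (a200 * (1 + 3 / (lam : ℂ)) * ((A : ℂ) + 2 * (lam : ℂ) * b200) -
          (lam : ℂ) * a000 * ((B : ℂ) * b200 + (lam : ℂ) * a200 ^ 2 - b200 ^ 2)) /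
        (10 * (4 + 3 / (lam : ℂ))))
    (hb400 : b400 = -(((lam : ℂ) * a000 * a200 * ((A : ℂ) + 2 * (lam : ℂ) * b200) -
          2 * ((B : ℂ) * b200 + (lam : ℂ) * a200 ^ 2 - b200 ^ 2)) /
        (10 * (4 + 3 / (lam : ℂ))))) :
    (lam : ℂ) * a000 * a400 * (A : ℂ) +
      2 * (lam : ℂ) ^ 2 * a000 * (a200 * b400 + a400 * b200) -
      3 * b400 * (B : ℂ) -
      6 * ((lam : ℂ) * a200 * a400 - b200 * b400) = 0 := by
  have h0 : (lam : ℂ) ≠ 0 := by exact_mod_cast hlam0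
  have h1 : (lam : ℂ) + 1 ≠ 0 := by
    have : lam + 1 ≠ 0 := fun h => hlam1 (by linarith)
    exact_mod_cast this
  have h2 : 4 * (lam : ℂ) + 3 ≠ 0 := by
    have : 4 * lam + 3 ≠ 0 := fun h => hlam2 (by linarith)
    exact_mod_cast this
  generalize (lam : ℂ) = l at *
  generalize (A : ℂ) = A' at *
  generalize (B : ℂ) = B' at *
  have e1 : 1 + 1 / l = (l + 1) / l := by field_simp
  have e2 : 4 + 3 / l = (4 * l + 3) / l := by field_simp
  rw [e1] at ha200 hb200
  rw [e2] at ha400 hb400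
  have hs : a000 ^ 2 = 9 * (2 * l + 1) / l ^ 3 := by
    field_simp at ha000 ⊢
    linear_combination ha000
  obtain ⟨p, hp⟩ : ∃ p, p = (A' + l * B') / (12 * (l + 1)) := ⟨_, rfl⟩
  have hap : a200 = a000 * p := by
    rw [ha200, hp]; field_simp
  have hb : b200 = (l * B' - A' * (2 * l + 1)) / (4 * l * (l + 1)) := by
    rw [hb200]; field_simp
  obtain ⟨P, hP⟩ : ∃ P, P = A' + 2 * l * b200 := ⟨_, rfl⟩
  obtain ⟨Q, hQ⟩ : ∃ Q, Q = B' * b200 + l * (a000 ^ 2 * p ^ 2) - b200 ^ 2 := ⟨_, rfl⟩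
  have hQ' : B' * b200 + l * a200 ^ 2 - b200 ^ 2 = Q := by rw [hQ, hap]; ring
  rw [hQ', ← hP, hap] at ha400 hb400
  obtain ⟨q, hq⟩ : ∃ q, q = (p * (l + 3) * P - l ^ 2 * Q) / (10 * (4 * l + 3)) := ⟨_, rfl⟩
  have haq : a400 = a000 * q := by
    rw [ha400, hq]; field_simp
  have hr : b400 = -((l ^ 2 * a000 ^ 2 * p * P - 2 * l * Q) / (10 * (4 * l + 3))) := by
    rw [hb400]; field_simp
  have key := B8_core l A' B' (a000 ^ 2) p b200 Q P q b400 h0 h1 h2 hs hp hb hP hQ hq hr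
  rw [hap, haq]
  linear_combination key
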